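/- Assume V ∈ C¹(ℝ^N), c ∈ ℝ, condition (V^c) and the coercivity condition (1.7). If q ∈ ℳ_c, then q is twice continuously differentiable on the open interval (α_q, ω_q) and q̈(t) = ∇V(q(t)) for all t ∈ (α_q, ω_q). -/

import Mathlib

open MeasureTheory Filter Metric Set Topology
open scoped ENNReal

noncomputable section

abbrev Euc (N : ℕ) := EuclideanSpace ℝ (Fin N)

def setDist {E : Type*} [PseudoMetricSpace E] (A B : Set E) : ℝ :=
  sInf ((fun p : E × E => dist p.1 p.2) '' (A ×ˢ B))

def IsH1loc {N : ℕ} (q q' : ℝ → Euc N) : Prop :=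
  LocallyIntegrable q' volume ∧
  (∀ a b : ℝ, IntegrableOn (fun t => ‖q' t‖ ^ 2) (Icc a b) volume) ∧
  (∀ a b : ℝ, q b - q a = ∫ t in a..b, q' t)

def lagJ {N : ℕ} (V : Euc N → ℝ) (c : ℝ) (q q' : ℝ → Euc N) (I : Set ℝ) : ℝ≥0∞ :=
  ∫⁻ t in I, ENNReal.ofReal (2⁻¹ * ‖q' t‖ ^ 2 + (V (q t) - c))

def Gamma {N : ℕ} (V : Euc N → ℝ) (c : ℝ) (Vm Vp : Set (Euc N)) :
    Set ((ℝ → Euc N) × (ℝ → Euc N)) :=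
  {p | IsH1loc p.1 p.2 ∧ (∀ t, c ≤ V (p.1 t)) ∧
    (∀ ε > 0, ∃ᶠ t in atBot, infDist (p.1 t) Vm < ε) ∧
    (∀ ε > 0, ∃ᶠ t in atTop, infDist (p.1 t) Vp < ε)}

def mc {N : ℕ} (V : Euc N → ℝ) (c : ℝ) (Vm Vp : Set (Euc N)) : ℝ≥0∞ :=
  ⨅ (p) (_ : p ∈ Gamma V c Vm Vp), lagJ V c p.1 p.2 univ

def Coercive {N : ℕ} (V : Euc N → ℝ) (c : ℝ) (Vm Vp : Set (Euc N)) (R : ℝ) : Prop :=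
  mc V c Vm Vp =
    ⨅ (p) (_ : p ∈ Gamma V c Vm Vp) (_ : ∀ t, ‖p.1 t‖ ≤ R), lagJ V c p.1 p.2 univ

/-- `ρ₀ := (1/4)·dist(𝒱⁻ ∩ B̄_R(0), 𝒱⁺ ∩ B̄_R(0))`. -/
def rho0 {N : ℕ} (Vm Vp : Set (Euc N)) (R : ℝ) : ℝ :=
  (1 / 4) * setDist (Vm ∩ closedBall 0 R) (Vp ∩ closedBall 0 R)

/-- membership in `ℳ_c`. -/
def MemM {N : ℕ} (V : Euc N → ℝ) (c : ℝ) (Vm Vp : Set (Euc N)) (R : ℝ)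
    (q q' : ℝ → Euc N) : Prop :=
  (q, q') ∈ Gamma V c Vm Vp ∧
  infDist (q 0) {x | V x ≤ c} = rho0 Vm Vp R ∧
  lagJ V c q q' univ = mc V c Vm Vp ∧
  (∀ t, ‖q t‖ ≤ R)

/-- `α_q` (valued in `[-∞,+∞]`, with `−∞` when `q(ℝ) ∩ 𝒱⁻ = ∅`). -/
def alphaQ {N : ℕ} (Vm : Set (Euc N)) (q : ℝ → Euc N) : EReal :=
  sSup {x : EReal | ∃ t : ℝ, x = (t : EReal) ∧ q t ∈ Vm}

/-- `ω_q` (valued in `[-∞,+∞]`, with `+∞` when there is no `t > α_q` with `q(t) ∈ 𝒱⁺`). -/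
def omegaQ {N : ℕ} (Vm Vp : Set (Euc N)) (q : ℝ → Euc N) : EReal :=
  sInf {x : EReal | ∃ t : ℝ, x = (t : EReal) ∧ alphaQ Vm q < (t : EReal) ∧ q t ∈ Vp}

/-- reflection of `q` with respect to `b` (used for `t > b`). -/
def reflPlus {N : ℕ} (q : ℝ → Euc N) (b : ℝ) : ℝ → Euc N :=
  fun t => if t ≤ b then q t else q (2 * b - t)

/-- reflection of `q` with respect to `a` (used for `t < a`). -/
def reflMinus {N : ℕ} (q : ℝ → Euc N) (a : ℝ) : ℝ → Euc N :=
  fun t => if a ≤ t then q t else q (2 * a - t)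

/-- ω-limit set `Ω_q := ⋂_{t > α_q} closure {q(s) : s ≥ t}`. -/
def omegaLimitSet {N : ℕ} (Vm : Set (Euc N)) (q : ℝ → Euc N) : Set (Euc N) :=
  ⋂ (t : ℝ) (_ : alphaQ Vm q < (t : EReal)), closure (q '' Ici t)

/-- α-limit set `𝒜_q := ⋂_{t < ω_q} closure {q(s) : s ≤ t}`. -/
def alphaLimitSet {N : ℕ} (Vm Vp : Set (Euc N)) (q : ℝ → Euc N) : Set (Euc N) :=
  ⋂ (t : ℝ) (_ : (t : EReal) < omegaQ Vm Vp q), closure (q '' Iic t)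

/-!
Where `V ∘ q > c` the constraint `V ∘ q ≥ c` is inactive: on a short interval `[a, b]` around such
a time, every perturbation `q + s • r` with `r` an `H¹` curve vanishing at `a` and `b` is admissible
for small `s`. Since `m_c` is finite (a curve of `Γ_c` can be cut off and joined to the sublevel set
by two segments ending at nearest points), the energy outside `[a, b]` cancels, and minimality gives
the weak equation `∫ ⟪q', r'⟫ + ⟪∇V(q), r⟫ = 0`.

No regularity theory is needed to conclude. The right-hand side `∇V ∘ q` is continuous, so
`y'' = ∇V ∘ q` has an explicit `C²` solution with `y = q` at `a` and `b`. Testing with `r = q - y`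
and integrating `⟪y', r'⟫` by parts gives `∫ ‖r'‖² = 0`, hence `q = y` on `[a, b]`.
-/

section AbsoluteContinuity

variable {X Y E : Type*} [PseudoMetricSpace X] [PseudoMetricSpace Y] [NormedAddCommGroup E]
  {a b : ℝ}

theorem absolutelyContinuousOnInterval_of_dist_le {f : ℝ → X} {g : ℝ → Y}
    (hg : AbsolutelyContinuousOnInterval g a b) (h : ∀ x y, dist (f x) (f y) ≤ dist (g x) (g y)) :
    AbsolutelyContinuousOnInterval f a b :=
  squeeze_zero (fun _ ↦ Finset.sum_nonneg fun _ _ ↦ dist_nonneg)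
    (fun _ ↦ Finset.sum_le_sum fun _ _ ↦ h _ _) hg

theorem absolutelyContinuousOnInterval_norm_sq {f : ℝ → E}
    (hf : AbsolutelyContinuousOnInterval f a b) :
    AbsolutelyContinuousOnInterval (fun t ↦ ‖f t‖ ^ 2) a b := by
  have hnorm := absolutelyContinuousOnInterval_of_dist_le (f := fun t ↦ ‖f t‖) hf
    fun x y ↦ (dist_norm_norm_le (f x) (f y)).trans_eq (dist_eq_norm _ _).symm
  simpa only [sq] using hnorm.fun_mul hnorm

theorem absolutelyContinuousOnInterval_inner [InnerProductSpace ℝ E] {f g : ℝ → E}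
    (hf : AbsolutelyContinuousOnInterval f a b) (hg : AbsolutelyContinuousOnInterval g a b) :
    AbsolutelyContinuousOnInterval (fun t ↦ inner ℝ (f t) (g t)) a b := by
  have hpolar := (((absolutelyContinuousOnInterval_norm_sq (hf.fun_add hg)).fun_sub
    (absolutelyContinuousOnInterval_norm_sq hf)).fun_sub
    (absolutelyContinuousOnInterval_norm_sq hg)).const_mul 2⁻¹
  convert hpolar using 2 with t
  rw [norm_add_sq_real]
  ring

end AbsoluteContinuity

section BoundaryValueProblem

variable {E : Type*} [NormedAddCommGroup E] [NormedSpace ℝ E] [CompleteSpace E]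

theorem exists_contDiff_two_deriv_deriv_eq {f : ℝ → E} (hf : Continuous f) {a b : ℝ}
    (hab : a ≠ b) (A B : E) :
    ∃ y : ℝ → E, ContDiff ℝ 2 y ∧ deriv (deriv y) = f ∧ y a = A ∧ y b = B := by
  let P : ℝ → E := fun t ↦ ∫ s in a..t, f s
  have hP (t : ℝ) : HasDerivAt P (f t) t := (hf.integral_hasStrictDerivAt a t).hasDerivAt
  have hPc : Continuous P := continuous_iff_continuousAt.2 fun t ↦ (hP t).continuousAt
  let k : E := (b - a)⁻¹ • (B - A - ∫ s in a..b, P s)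
  let y : ℝ → E := fun t ↦ A + (∫ s in a..t, P s) + (t - a) • k
  have hy (t : ℝ) : HasDerivAt y (P t + k) t := by
    simpa using (((hPc.integral_hasStrictDerivAt a t).hasDerivAt.const_add A).fun_add
      (((hasDerivAt_id t).sub_const a).smul_const k))
  have hy' : deriv y = fun t ↦ P t + k := funext fun t ↦ (hy t).deriv
  have hy'' (t : ℝ) : HasDerivAt (deriv y) (f t) t := hy' ▸ (hP t).add_const k
  have hy''_eq : deriv (deriv y) = f := funext fun t ↦ (hy'' t).deriv
  refine ⟨y, ?_, hy''_eq, by simp [y], ?_⟩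
  · rw [← one_add_one_eq_two, contDiff_succ_iff_deriv, contDiff_one_iff_deriv, hy''_eq]
    exact ⟨fun t ↦ (hy t).differentiableAt, by simp, fun t ↦ (hy'' t).differentiableAt, hf⟩
  · simp only [y, k, smul_inv_smul₀ (sub_ne_zero.2 hab.symm)]
    abel

end BoundaryValueProblem

section FirstVariation

variable {E : Type*} [NormedAddCommGroup E] [InnerProductSpace ℝ E] {a b : ℝ}

theorem hasDerivAt_integral_half_norm_sq {u v : ℝ → E}
    (hu : IntervalIntegrable (fun t ↦ ‖u t‖ ^ 2) volume a b)
    (hv : IntervalIntegrable (fun t ↦ ‖v t‖ ^ 2) volume a b)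
    (huv : IntervalIntegrable (fun t ↦ inner ℝ (u t) (v t)) volume a b) :
    HasDerivAt (fun s : ℝ ↦ ∫ t in a..b, 2⁻¹ * ‖u t + s • v t‖ ^ 2)
      (∫ t in a..b, inner ℝ (u t) (v t)) 0 := by
  have hexpand (s : ℝ) : ∫ t in a..b, 2⁻¹ * ‖u t + s • v t‖ ^ 2 =
      2⁻¹ * (∫ t in a..b, ‖u t‖ ^ 2) + s * (∫ t in a..b, inner ℝ (u t) (v t)) +
        s ^ 2 * (2⁻¹ * ∫ t in a..b, ‖v t‖ ^ 2) := by
    simp only [← intervalIntegral.integral_const_mul]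
    rw [← intervalIntegral.integral_add (hu.const_mul _) (huv.const_mul _),
      ← intervalIntegral.integral_add ((hu.const_mul _).add (huv.const_mul _))
        ((hv.const_mul _).const_mul _)]
    refine intervalIntegral.integral_congr fun t _ ↦ ?_
    simp only [norm_add_sq_real, inner_smul_right, norm_smul, mul_pow, Real.norm_eq_abs, sq_abs]
    ring
  rw [funext hexpand]
  simpa using (((hasDerivAt_id (0 : ℝ)).mul_const (∫ t in a..b, inner ℝ (u t) (v t))).const_add
    (2⁻¹ * ∫ t in a..b, ‖u t‖ ^ 2)).fun_add
      (((hasDerivAt_id (0 : ℝ)).pow 2).mul_const (2⁻¹ * ∫ t in a..b, ‖v t‖ ^ 2))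

variable [CompleteSpace E] {V : E → ℝ}

theorem continuous_gradient (hV : ContDiff ℝ 1 V) : Continuous (gradient V) :=
  (InnerProductSpace.toDual ℝ E).symm.continuous.comp (hV.continuous_fderiv one_ne_zero)

theorem hasDerivAt_integral_comp_add_smul (hV : ContDiff ℝ 1 V) {q r : ℝ → E}
    (hq : Continuous q) (hr : Continuous r) :
    HasDerivAt (fun s : ℝ ↦ ∫ t in a..b, V (q t + s • r t))
      (∫ t in a..b, inner ℝ (gradient V (q t)) (r t)) 0 := by
  have hVc := hV.continuous
  have hgrad := continuous_gradient hV
  have hderiv (s t : ℝ) : HasDerivAt (fun s : ℝ ↦ V (q t + s • r t))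
      (inner ℝ (gradient V (q t + s • r t)) (r t)) s := by
    have hline : HasDerivAt (fun s : ℝ ↦ q t + s • r t) (r t) s := by
      simpa using ((hasDerivAt_id s).smul_const (r t)).const_add (q t)
    exact (hV.differentiable one_ne_zero _).hasGradientAt.hasFDerivAt.comp_hasDerivAt s hline
  obtain ⟨M, hM⟩ := (isCompact_Icc (a := (-1 : ℝ)) (b := 1)).prod
    (isCompact_uIcc (a := a) (b := b)) |>.exists_bound_of_continuousOn
      (f := fun x : ℝ × ℝ ↦ inner ℝ (gradient V (q x.2 + x.1 • r x.2)) (r x.2))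
      (Continuous.continuousOn (by fun_prop))
  simpa using (intervalIntegral.hasDerivAt_integral_of_dominated_loc_of_deriv_le
    (μ := volume) (x₀ := (0 : ℝ)) (s := Icc (-1) 1) (F := fun s t ↦ V (q t + s • r t))
    (F' := fun s t ↦ inner ℝ (gradient V (q t + s • r t)) (r t)) (bound := fun _ ↦ M)
    (Icc_mem_nhds (by norm_num) (by norm_num))
    (Eventually.of_forall fun s ↦ Continuous.aestronglyMeasurable (by fun_prop))
    (Continuous.intervalIntegrable (by fun_prop) _ _)
    (Continuous.aestronglyMeasurable (by fun_prop))
    (Eventually.of_forall fun t ht s hs ↦ hM (s, t) ⟨hs, uIoc_subset_uIcc ht⟩)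
    intervalIntegrable_const
    (Eventually.of_forall fun t _ s _ ↦ hderiv s t)).2

end FirstVariation

/-- The curve that follows `l` up to time `a`, then `m` up to time `b`, then `r`; used to build
competitors in `Gamma`. -/
def splice {E : Type*} (a b : ℝ) (l m r : ℝ → E) : ℝ → E :=
  (Iic a).piecewise l ((Iic b).piecewise m r)

section Splice

variable {E : Type*} {a b t : ℝ} {l m r : ℝ → E}

theorem splice_of_le (h : t ≤ a) : splice a b l m r t = l t :=
  piecewise_eq_of_mem (Iic a) _ _ h

theorem splice_of_lt_of_le (h : a < t) (h' : t ≤ b) : splice a b l m r t = m t :=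
  (piecewise_eq_of_notMem (Iic a) _ _ (notMem_Iic.2 h)).trans
    (piecewise_eq_of_mem (Iic b) _ _ h')

theorem splice_of_lt (hab : a ≤ b) (h : b < t) : splice a b l m r t = r t :=
  (piecewise_eq_of_notMem (Iic a) _ _ (notMem_Iic.2 (hab.trans_lt h))).trans
    (piecewise_eq_of_notMem (Iic b) _ _ (notMem_Iic.2 h))

end Splice

namespace IsH1loc

variable {N : ℕ} {q q' p p' : ℝ → Euc N}

theorem intervalIntegrable (h : IsH1loc q q') (a b : ℝ) : IntervalIntegrable q' volume a b :=
  (h.1.integrableOn_isCompact isCompact_uIcc).intervalIntegrable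

theorem intervalIntegrable_norm_sq (h : IsH1loc q q') (a b : ℝ) :
    IntervalIntegrable (fun t ↦ ‖q' t‖ ^ 2) volume a b :=
  IntegrableOn.intervalIntegrable (h.2.1 _ _)

theorem eq_add_integral (h : IsH1loc q q') (a : ℝ) : q = fun t ↦ q a + ∫ s in a..t, q' s :=
  funext fun t ↦ by rw [← h.2.2, add_sub_cancel]

theorem of_eq_add_integral {a : ℝ} (hint : LocallyIntegrable q' volume)
    (hsq : ∀ x y : ℝ, IntegrableOn (fun t ↦ ‖q' t‖ ^ 2) (Icc x y) volume)
    (heq : ∀ t, q t = q a + ∫ s in a..t, q' s) : IsH1loc q q' := by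
  have hii (x y : ℝ) : IntervalIntegrable q' volume x y :=
    (hint.integrableOn_isCompact isCompact_uIcc).intervalIntegrable
  refine ⟨hint, hsq, fun x y ↦ ?_⟩
  rw [heq x, heq y, add_sub_add_left_eq_sub,
    intervalIntegral.integral_interval_sub_left (hii a y) (hii a x)]

theorem of_contDiff (hq : ContDiff ℝ 1 q) : IsH1loc q (deriv q) := by
  have hc := hq.continuous_deriv_one
  refine of_eq_add_integral (a := 0) hc.locallyIntegrable
    (fun _ _ ↦ (hc.norm.pow 2).integrableOn_Icc) fun t ↦ ?_
  rw [intervalIntegral.integral_deriv_of_contDiffOn_uIcc hq.contDiffOn, add_sub_cancel]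

theorem continuous (h : IsH1loc q q') : Continuous q := by
  rw [h.eq_add_integral 0]
  exact continuous_const.add (intervalIntegral.continuous_primitive h.intervalIntegrable 0)

theorem ae_hasDerivAt (h : IsH1loc q q') : ∀ᵐ t, HasDerivAt q (q' t) t := by
  filter_upwards [LocallyIntegrable.ae_hasDerivAt_integral h.1] with t ht
  rw [h.eq_add_integral 0]
  exact (ht 0).const_add _

theorem absolutelyContinuousOnInterval (h : IsH1loc q q') (a b : ℝ) :
    AbsolutelyContinuousOnInterval q a b := by
  refine absolutelyContinuousOnInterval_of_dist_le
    ((h.intervalIntegrable a b).norm.absolutelyContinuousOnInterval_intervalIntegral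
      left_mem_uIcc) fun x y ↦ ?_
  rw [dist_eq_norm, h.2.2, Real.dist_eq, intervalIntegral.integral_interval_sub_left
    (h.intervalIntegrable a x).norm (h.intervalIntegrable a y).norm]
  exact intervalIntegral.norm_integral_le_abs_integral_norm

theorem add_smul (h : IsH1loc q q') (k : IsH1loc p p') (s : ℝ) :
    IsH1loc (q + s • p) (q' + s • p') := by
  have hint : LocallyIntegrable (q' + s • p') volume := h.1.add (k.1.smul s)
  refine ⟨hint, fun a b ↦ ?_, fun a b ↦ ?_⟩
  · refine (((h.2.1 a b).add ((k.2.1 a b).const_mul (s ^ 2))).const_mul 2).mono'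
      ((hint.integrableOn_isCompact isCompact_Icc).aestronglyMeasurable.norm.pow 2)
      (Eventually.of_forall fun t ↦ ?_)
    calc ‖‖q' t + s • p' t‖ ^ 2‖ ≤ (‖q' t‖ + ‖s • p' t‖) ^ 2 := by
          rw [Real.norm_of_nonneg (by positivity)]
          gcongr
          exact norm_add_le _ _
      _ ≤ 2 * (‖q' t‖ ^ 2 + ‖s • p' t‖ ^ 2) := add_sq_le
      _ = 2 * (‖q' t‖ ^ 2 + s ^ 2 * ‖p' t‖ ^ 2) := by
          rw [norm_smul, mul_pow, Real.norm_eq_abs, sq_abs]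
  · have hsp : IntervalIntegrable (fun t ↦ s • p' t) volume a b := (k.intervalIntegrable a b).smul s
    simp only [Pi.add_apply, Pi.smul_apply]
    rw [intervalIntegral.integral_add (h.intervalIntegrable a b) hsp,
      intervalIntegral.integral_smul, ← h.2.2, ← k.2.2]
    module

theorem sub (h : IsH1loc q q') (k : IsH1loc p p') : IsH1loc (q - p) (q' - p') := by
  simpa only [neg_one_smul, ← sub_eq_add_neg] using h.add_smul k (-1)

theorem piecewise_Iic (h : IsH1loc q q') (k : IsH1loc p p') {a : ℝ} (ha : q a = p a) :
    IsH1loc ((Iic a).piecewise q p) ((Iic a).piecewise q' p') := by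
  have hsq : (fun t ↦ ‖(Iic a).piecewise q' p' t‖ ^ 2) =
      (Iic a).piecewise (fun t ↦ ‖q' t‖ ^ 2) (fun t ↦ ‖p' t‖ ^ 2) :=
    funext fun t ↦ apply_piecewise (Iic a) q' p' fun _ v ↦ ‖v‖ ^ 2
  refine of_eq_add_integral (a := a) ?_ (fun x y ↦ ?_) fun t ↦ ?_
  · rw [← indicator_add_compl_eq_piecewise]
    exact (h.1.indicator measurableSet_Iic).add (k.1.indicator measurableSet_Iic.compl)
  · rw [hsq]
    exact Integrable.piecewise measurableSet_Iic (h.2.1 x y).integrableOn (k.2.1 x y).integrableOn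
  · rw [piecewise_eq_of_mem (Iic a) _ _ self_mem_Iic]
    rcases le_or_gt t a with hta | hat
    · rw [piecewise_eq_of_mem (Iic a) _ _ hta, congrFun (h.eq_add_integral a) t]
      congr 1
      refine intervalIntegral.integral_congr fun s hs ↦ (piecewise_eq_of_mem (Iic a) _ _ ?_).symm
      exact (uIcc_of_ge hta ▸ hs).2
    · rw [piecewise_eq_of_notMem (Iic a) _ _ (notMem_Iic.2 hat),
        congrFun (k.eq_add_integral a) t, ha]
      congr 1
      refine intervalIntegral.integral_congr_ae (Eventually.of_forall fun s hs ↦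
        (piecewise_eq_of_notMem (Iic a) _ _ ?_).symm)
      exact notMem_Iic.2 (uIoc_of_le hat.le ▸ hs).1

theorem splice {l l' m m' r r' : ℝ → Euc N} {a b : ℝ} (hab : a ≤ b) (hl : IsH1loc l l')
    (hm : IsH1loc m m') (hr : IsH1loc r r') (ha : l a = m a) (hb : m b = r b) :
    IsH1loc (splice a b l m r) (splice a b l' m' r') :=
  hl.piecewise_Iic (hm.piecewise_Iic hr hb) (ha.trans (piecewise_eq_of_mem (Iic b) _ _ hab).symm)

theorem intervalIntegrable_inner (h : IsH1loc q q') (k : IsH1loc p p') (a b : ℝ) :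
    IntervalIntegrable (fun t ↦ inner ℝ (q' t) (p' t)) volume a b := by
  have hpolar := ((((h.add_smul k 1).intervalIntegrable_norm_sq a b).sub
    (h.intervalIntegrable_norm_sq a b)).sub (k.intervalIntegrable_norm_sq a b)).const_mul 2⁻¹
  convert hpolar using 2 with t
  simp only [Pi.add_apply, one_smul, norm_add_sq_real]
  ring

theorem integral_inner_add_inner_eq_sub (h : IsH1loc q q') (k : IsH1loc p p') (a b : ℝ) :
    ∫ t in a..b, (inner ℝ (q t) (p' t) + inner ℝ (q' t) (p t)) =
      inner ℝ (q b) (p b) - inner ℝ (q a) (p a) := by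
  rw [← (absolutelyContinuousOnInterval_inner (h.absolutelyContinuousOnInterval a b)
    (k.absolutelyContinuousOnInterval a b)).integral_deriv_eq_sub]
  refine intervalIntegral.integral_congr_ae ?_
  filter_upwards [h.ae_hasDerivAt, k.ae_hasDerivAt] with t hq hp _
  exact (hq.inner ℝ hp).deriv.symm

theorem eqOn_const_of_integral_norm_sq_eq_zero (h : IsH1loc q q') {a b : ℝ} (hab : a ≤ b)
    (hzero : ∫ t in a..b, ‖q' t‖ ^ 2 = 0) : EqOn q (fun _ ↦ q a) (Icc a b) := by
  have hae : ∀ᵐ t, t ∈ Ioc a b → q' t = 0 := by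
    rw [intervalIntegral.integral_eq_zero_iff_of_le_of_nonneg_ae hab
      (Eventually.of_forall fun t ↦ by positivity) (h.intervalIntegrable_norm_sq a b),
      EventuallyEq, ae_restrict_iff' measurableSet_Ioc] at hzero
    simpa using hzero
  intro t ht
  rw [← sub_eq_zero, h.2.2]
  refine intervalIntegral.integral_zero_ae ?_
  filter_upwards [hae] with s hs hst
  rw [uIoc_of_le ht.1] at hst
  exact hs ⟨hst.1, hst.2.trans ht.2⟩

theorem eqOn_of_weak_eq (h : IsH1loc q q') {y : ℝ → Euc N} (hy : ContDiff ℝ 2 y) {a b : ℝ}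
    (hab : a ≤ b) (hya : y a = q a) (hyb : y b = q b)
    (hweak : ∀ r r' : ℝ → Euc N, IsH1loc r r' → r a = 0 → r b = 0 →
      ∫ t in a..b, (inner ℝ (q' t) (r' t) + inner ℝ (deriv (deriv y) t) (r t)) = 0) :
    EqOn q y (Icc a b) := by
  have hy1 : IsH1loc y (deriv y) := of_contDiff (hy.of_le one_le_two)
  have hy' : ContDiff ℝ 1 (deriv y) := (contDiff_succ_iff_deriv.1 hy).2.2
  obtain ⟨r, hr_def⟩ : ∃ r, r = q - y := ⟨_, rfl⟩
  obtain ⟨r', hr'_def⟩ : ∃ r', r' = q' - deriv y := ⟨_, rfl⟩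
  have hr : IsH1loc r r' := hr_def ▸ hr'_def ▸ h.sub hy1
  have hra : r a = 0 := by simp [hr_def, hya]
  have hrb : r b = 0 := by simp [hr_def, hyb]
  have hparts : ∫ t in a..b, (inner ℝ (deriv y t) (r' t) + inner ℝ (deriv (deriv y) t) (r t)) =
      0 := by
    rw [(of_contDiff hy').integral_inner_add_inner_eq_sub hr, hra, hrb, inner_zero_right,
      inner_zero_right, sub_zero]
  have hy''r : IntervalIntegrable (fun t ↦ inner ℝ (deriv (deriv y) t) (r t)) volume a b :=
    (hy'.continuous_deriv_one.inner hr.continuous).intervalIntegrable _ _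
  have hzero : ∫ t in a..b, ‖r' t‖ ^ 2 = 0 := calc
    ∫ t in a..b, ‖r' t‖ ^ 2
      = ∫ t in a..b, ((inner ℝ (q' t) (r' t) + inner ℝ (deriv (deriv y) t) (r t)) -
          (inner ℝ (deriv y t) (r' t) + inner ℝ (deriv (deriv y) t) (r t))) := by
        refine intervalIntegral.integral_congr fun t _ ↦ ?_
        simp only [add_sub_add_right_eq_sub, ← inner_sub_left, ← real_inner_self_eq_norm_sq,
          hr'_def, Pi.sub_apply]
    _ = (∫ t in a..b, (inner ℝ (q' t) (r' t) + inner ℝ (deriv (deriv y) t) (r t))) -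
          ∫ t in a..b, (inner ℝ (deriv y t) (r' t) + inner ℝ (deriv (deriv y) t) (r t)) :=
        intervalIntegral.integral_sub ((h.intervalIntegrable_inner hr a b).add hy''r)
          ((hy1.intervalIntegrable_inner hr a b).add hy''r)
    _ = 0 := by rw [hweak r r' hr hra hrb, hparts, sub_zero]
  intro t ht
  have hrt : r t = 0 := (hr.eqOn_const_of_integral_norm_sq_eq_zero hab hzero ht).trans hra
  rwa [hr_def, Pi.sub_apply, sub_eq_zero] at hrt

end IsH1loc

section Tails

variable {X E : Type*} [PseudoMetricSpace X] [NormedAddCommGroup E] [NormedSpace ℝ E]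

theorem setDist_le_dist {A B : Set X} {x y : X} (hx : x ∈ A) (hy : y ∈ B) :
    setDist A B ≤ dist x y := by
  refine csInf_le ⟨0, ?_⟩ ⟨(x, y), ⟨hx, hy⟩, rfl⟩
  rintro _ ⟨p, -, rfl⟩
  exact dist_nonneg

theorem setDist_comm (A B : Set X) : setDist A B = setDist B A := by
  rw [setDist, setDist, ← image_swap_prod, image_image]
  simp only [Prod.fst_swap, Prod.snd_swap, dist_comm]

theorem nonempty_of_setDist_pos {A B : Set X} (h : 0 < setDist A B) : A.Nonempty ∧ B.Nonempty :=
  prod_nonempty_iff.1 <| nonempty_iff_ne_empty.2 fun hempty ↦ by simp [setDist, hempty] at h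

theorem le_comp_add_smul_sub_of_dist_eq_infDist {V : E → ℝ} (hV : Continuous V) {c : ℝ} {z x : E}
    (hz : c ≤ V z) (hzx : dist z x = infDist z {y | V y ≤ c}) {s : ℝ} (hs : s ∈ Icc 0 1) :
    c ≤ V (z + s • (x - z)) := by
  rcases eq_or_ne z x with rfl | hne
  · simpa using hz
  have hIco : ∀ s ∈ Ico (0 : ℝ) 1, c ≤ V (z + s • (x - z)) := by
    intro s hs
    by_contra! hlt
    have hle : dist z x ≤ s * dist z x := calc
      dist z x ≤ dist z (z + s • (x - z)) := hzx ▸ infDist_le_dist_of_mem hlt.le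
      _ = s * dist z x := by
        rw [dist_self_add_right, norm_smul, Real.norm_of_nonneg hs.1, dist_comm, dist_eq_norm]
    nlinarith [dist_pos.2 hne, hs.2]
  have hclosed : IsClosed {s : ℝ | c ≤ V (z + s • (x - z))} :=
    isClosed_le continuous_const (by fun_prop)
  exact closure_minimal hIco hclosed (closure_Ico (zero_ne_one' ℝ) ▸ hs)

theorem exists_mem_dist_eq_infDist_sublevel [ProperSpace X] {V : X → ℝ} (hV : Continuous V) {c : ℝ}
    {A B : Set X} (hsplit : {x | V x ≤ c} = A ∪ B) (hA : A.Nonempty) {z : X}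
    (hzA : infDist z A < setDist A B / 2) : ∃ x ∈ A, dist z x = infDist z {x | V x ≤ c} := by
  have hne : {x | V x ≤ c}.Nonempty := hsplit ▸ hA.inl
  obtain ⟨x, hx, hzx⟩ := (isClosed_le hV continuous_const).exists_infDist_eq_dist hne z
  refine ⟨x, (hsplit ▸ hx : x ∈ A ∪ B).resolve_right fun hxB ↦ ?_, hzx.symm⟩
  obtain ⟨y, hyA, hzy⟩ := (infDist_lt_iff hA).1 hzA
  have hzx_le : dist z x ≤ dist z y := hzx ▸ infDist_le_dist_of_mem (hsplit ▸ Or.inl hyA)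
  linarith [setDist_le_dist hyA hxB, dist_triangle_left y x z]

theorem exists_contDiff_eventually_const [ProperSpace E] {V : E → ℝ} (hV : Continuous V) {c : ℝ}
    {A B : Set E} (hsplit : {x | V x ≤ c} = A ∪ B) (hA : A.Nonempty) {z : E} (hz : c ≤ V z)
    (hzA : infDist z A < setDist A B / 2) (a : ℝ) :
    ∃ γ : ℝ → E, ContDiff ℝ 1 γ ∧ γ a = z ∧ (∀ t, c ≤ V (γ t)) ∧
      ∃ x ∈ A, V x = c ∧ ∀ t, 1 ≤ |t - a| → γ t = x := by
  obtain ⟨x, hxA, hzx⟩ := exists_mem_dist_eq_infDist_sublevel hV hsplit hA hzA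
  have hsegment {s : ℝ} (hs : s ∈ Icc 0 1) : c ≤ V (z + s • (x - z)) :=
    le_comp_add_smul_sub_of_dist_eq_infDist hV hz hzx hs
  -- Squaring `t - a` makes the path rest at `x` on both sides of `a`: it can serve as either tail.
  refine ⟨fun t ↦ z + Real.smoothTransition ((t - a) ^ 2) • (x - z), ?_, by simp, fun t ↦
    hsegment ⟨Real.smoothTransition.nonneg _, Real.smoothTransition.le_one _⟩, x, hxA, ?_, ?_⟩
  · exact contDiff_const.add ((Real.smoothTransition.contDiff.comp
      ((contDiff_id.sub contDiff_const).pow 2)).smul contDiff_const)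
  · refine le_antisymm (hsplit ▸ Or.inl hxA : x ∈ {x | V x ≤ c}) ?_
    simpa using hsegment (right_mem_Icc.2 zero_le_one)
  · intro t ht
    simp [Real.smoothTransition.one_of_one_le ((one_le_sq_iff_one_le_abs _).2 ht)]

end Tails

/-- The action of `(q, q')` over `[a, b]` for the Lagrangian `½|q'|² + V(q)`. Unlike in `lagJ`,
the energy level is not subtracted, which changes the action by a constant only. -/
def action {N : ℕ} (V : Euc N → ℝ) (q q' : ℝ → Euc N) (a b : ℝ) : ℝ :=
  ∫ t in a..b, (2⁻¹ * ‖q' t‖ ^ 2 + V (q t))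

section Action

variable {N : ℕ} {V : Euc N → ℝ} {c a b : ℝ} {Vm Vp : Set (Euc N)} {q q' p p' r r' : ℝ → Euc N}

theorem IsH1loc.intervalIntegrable_lagrangian (h : IsH1loc q q') (hV : Continuous V) (a b : ℝ) :
    IntervalIntegrable (fun t ↦ 2⁻¹ * ‖q' t‖ ^ 2 + V (q t)) volume a b :=
  ((h.intervalIntegrable_norm_sq a b).const_mul _).add
    ((hV.comp h.continuous).intervalIntegrable a b)

theorem IsH1loc.action_sub_mul_eq_integral (h : IsH1loc q q') (hV : Continuous V) (c a b : ℝ) :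
    action V q q' a b - (b - a) * c = ∫ t in a..b, (2⁻¹ * ‖q' t‖ ^ 2 + (V (q t) - c)) := by
  simp only [← add_sub_assoc]
  rw [intervalIntegral.integral_sub (h.intervalIntegrable_lagrangian hV a b)
    intervalIntegrable_const, intervalIntegral.integral_const, smul_eq_mul, action]

theorem IsH1loc.lagJ_Ioc_eq_ofReal (h : IsH1loc q q') (hV : Continuous V) (hab : a ≤ b)
    (hc : ∀ t ∈ Icc a b, c ≤ V (q t)) :
    lagJ V c q q' (Ioc a b) = ENNReal.ofReal (action V q q' a b - (b - a) * c) := by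
  rw [h.action_sub_mul_eq_integral hV, intervalIntegral.integral_of_le hab,
    ofReal_integral_eq_lintegral_ofReal, lagJ]
  · simp only [← add_sub_assoc]
    exact ((h.intervalIntegrable_lagrangian hV a b).sub intervalIntegrable_const).1
  · filter_upwards [ae_restrict_mem measurableSet_Ioc] with t ht
    have := sub_nonneg.2 (hc t (Ioc_subset_Icc_self ht))
    positivity

theorem IsH1loc.mul_le_action (h : IsH1loc q q') (hV : Continuous V) (hab : a ≤ b)
    (hc : ∀ t ∈ Icc a b, c ≤ V (q t)) : (b - a) * c ≤ action V q q' a b := by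
  rw [← sub_nonneg, h.action_sub_mul_eq_integral hV]
  refine intervalIntegral.integral_nonneg hab fun t ht ↦ ?_
  have := sub_nonneg.2 (hc t ht)
  positivity

theorem IsH1loc.lagJ_univ_lt_top (h : IsH1loc q q') (hV : Continuous V) (hab : a ≤ b)
    (hc : ∀ t ∈ Icc a b, c ≤ V (q t)) (hrest : ∀ t ∉ Ioc a b, q' t = 0 ∧ V (q t) = c) :
    lagJ V c q q' univ < ⊤ := by
  have hcompl : ∫⁻ t in (Ioc a b)ᶜ, ENNReal.ofReal (2⁻¹ * ‖q' t‖ ^ 2 + (V (q t) - c)) = 0 :=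
    setLIntegral_eq_zero measurableSet_Ioc.compl fun t ht ↦ by simp [hrest t ht]
  have hIoc := h.lagJ_Ioc_eq_ofReal hV hab hc
  rw [lagJ] at hIoc
  rw [lagJ, setLIntegral_univ, ← lintegral_add_compl _ (measurableSet_Ioc (a := a) (b := b)),
    hcompl, add_zero, hIoc]
  exact ENNReal.ofReal_lt_top

theorem lagJ_univ_eq_add (hab : a ≤ b) : lagJ V c q q' univ =
    lagJ V c q q' (Iic a) + (lagJ V c q q' (Ioc a b) + lagJ V c q q' (Ioi b)) := by
  simp only [lagJ]
  rw [← lintegral_union measurableSet_Ioi (Ioc_disjoint_Ioi le_rfl), Ioc_union_Ioi_eq_Ioi hab,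
    ← compl_Iic, lintegral_add_compl _ measurableSet_Iic, setLIntegral_univ]

theorem lagJ_congr {S : Set ℝ} (hS : MeasurableSet S) (h : EqOn q p S) (h' : EqOn q' p' S) :
    lagJ V c q q' S = lagJ V c p p' S :=
  setLIntegral_congr_fun hS fun t ht ↦ by simp only [h ht, h' ht]

theorem lagJ_splice {l l' m m' : ℝ → Euc N} (hab : a ≤ b) :
    lagJ V c (splice a b l m r) (splice a b l' m' r') univ =
      lagJ V c l l' (Iic a) + (lagJ V c m m' (Ioc a b) + lagJ V c r r' (Ioi b)) := by
  rw [lagJ_univ_eq_add hab]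
  congr 1
  · exact lagJ_congr measurableSet_Iic (fun _ ↦ splice_of_le) fun _ ↦ splice_of_le
  congr 1
  · exact lagJ_congr measurableSet_Ioc (fun _ ht ↦ splice_of_lt_of_le ht.1 ht.2)
      fun _ ht ↦ splice_of_lt_of_le ht.1 ht.2
  · exact lagJ_congr measurableSet_Ioi (fun _ ↦ splice_of_lt hab) fun _ ↦ splice_of_lt hab

theorem splice_mem_Gamma {l l' m m' : ℝ → Euc N} (hab : a ≤ b) (hl : IsH1loc l l')
    (hm : IsH1loc m m') (hr : IsH1loc r r') (ha : l a = m a) (hb : m b = r b)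
    (hcl : ∀ t, c ≤ V (l t)) (hcm : ∀ t ∈ Icc a b, c ≤ V (m t)) (hcr : ∀ t, c ≤ V (r t))
    (hl_lim : ∀ ε > 0, ∃ᶠ t in atBot, infDist (l t) Vm < ε)
    (hr_lim : ∀ ε > 0, ∃ᶠ t in atTop, infDist (r t) Vp < ε) :
    (splice a b l m r, splice a b l' m' r') ∈ Gamma V c Vm Vp := by
  refine ⟨hl.splice hab hm hr ha hb, fun t ↦ ?_, fun ε hε ↦ ?_, fun ε hε ↦ ?_⟩
  · rcases le_or_gt t a with hta | hat
    · simpa only [splice_of_le hta] using hcl t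
    rcases le_or_gt t b with htb | hbt
    · simpa only [splice_of_lt_of_le hat htb] using hcm t ⟨hat.le, htb⟩
    · simpa only [splice_of_lt hab hbt] using hcr t
  · refine ((hl_lim ε hε).and_eventually (eventually_le_atBot a)).mono fun t ht ↦ ?_
    simpa only [splice_of_le ht.2] using ht.1
  · refine ((hr_lim ε hε).and_eventually (eventually_gt_atTop b)).mono fun t ht ↦ ?_
    simpa only [splice_of_lt hab ht.2] using ht.1

theorem mc_le_lagJ (h : (q, q') ∈ Gamma V c Vm Vp) : mc V c Vm Vp ≤ lagJ V c q q' univ :=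
  iInf₂_le (q, q') h

theorem exists_isH1loc_lagJ_lt_top {A B : Set (Euc N)} (hV : Continuous V)
    (hsplit : {x | V x ≤ c} = A ∪ B) (hA : A.Nonempty) {z : Euc N} (hz : c ≤ V z)
    (hzA : infDist z A < setDist A B / 2) (a : ℝ) :
    ∃ γ γ' : ℝ → Euc N, IsH1loc γ γ' ∧ γ a = z ∧ (∀ t, c ≤ V (γ t)) ∧
      lagJ V c γ γ' univ < ⊤ ∧ ∀ t, 1 ≤ |t - a| → γ t ∈ A := by
  obtain ⟨γ, hγ, hγa, hcγ, x, hxA, hVx, hγx⟩ :=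
    exists_contDiff_eventually_const hV hsplit hA hz hzA a
  have hH1 := IsH1loc.of_contDiff hγ
  refine ⟨γ, deriv γ, hH1, hγa, hcγ, hH1.lagJ_univ_lt_top (a := a - 2) (b := a + 2) hV (by linarith)
    (fun t _ ↦ hcγ t) fun t ht ↦ ?_, fun t ht ↦ hγx t ht ▸ hxA⟩
  have hta : 1 < |t - a| := by
    contrapose! ht
    constructor <;> linarith [abs_le.1 ht]
  refine ⟨?_, hγx t hta.le ▸ hVx⟩
  have hconst : γ =ᶠ[𝓝 t] fun _ ↦ x :=
    ((continuous_id.sub continuous_const).abs.continuousAt.eventually_const_lt hta).mono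
      fun s hs ↦ hγx s (le_of_lt hs)
  rw [hconst.deriv_eq, deriv_const]

theorem mc_lt_top (hV : Continuous V) (hsplit : {x | V x ≤ c} = Vm ∪ Vp)
    (hsep : 0 < setDist Vm Vp) (h : (q, q') ∈ Gamma V c Vm Vp) : mc V c Vm Vp < ⊤ := by
  obtain ⟨hq, hc, hminus, hplus⟩ := h
  obtain ⟨hVm, hVp⟩ := nonempty_of_setDist_pos hsep
  obtain ⟨a, ha, ha0⟩ :=
    ((hminus _ (half_pos hsep)).and_eventually (eventually_le_atBot 0)).exists
  obtain ⟨b, hb, hb0⟩ :=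
    ((hplus _ (half_pos hsep)).and_eventually (eventually_ge_atTop 0)).exists
  have hab : a ≤ b := ha0.trans hb0
  obtain ⟨l, l', hl, hla, hcl, hl_fin, hl_mem⟩ :=
    exists_isH1loc_lagJ_lt_top hV hsplit hVm (hc a) ha a
  obtain ⟨r, r', hr, hrb, hcr, hr_fin, hr_mem⟩ :=
    exists_isH1loc_lagJ_lt_top hV (union_comm Vm Vp ▸ hsplit) hVp (hc b)
      (setDist_comm Vm Vp ▸ hb) b
  refine (mc_le_lagJ (splice_mem_Gamma hab hl hq hr hla hrb.symm hcl (fun t _ ↦ hc t) hcr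
    (fun ε hε ↦ ?_) fun ε hε ↦ ?_)).trans_lt ?_
  · refine ((eventually_le_atBot (a - 1)).mono fun t ht ↦ ?_).frequently
    rwa [infDist_zero_of_mem (hl_mem t (le_abs'.2 (Or.inl (by linarith))))]
  · refine ((eventually_ge_atTop (b + 1)).mono fun t ht ↦ ?_).frequently
    rwa [infDist_zero_of_mem (hr_mem t (le_abs'.2 (Or.inr (by linarith))))]
  · rw [lagJ_splice hab, hq.lagJ_Ioc_eq_ofReal hV hab fun t _ ↦ hc t]
    exact ENNReal.add_lt_top.2 ⟨(lintegral_mono_set (subset_univ _)).trans_lt hl_fin,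
      ENNReal.add_lt_top.2 ⟨ENNReal.ofReal_lt_top,
        (lintegral_mono_set (subset_univ _)).trans_lt hr_fin⟩⟩

theorem action_le_of_lagJ_eq_mc (hV : Continuous V) (hq : (q, q') ∈ Gamma V c Vm Vp)
    (hmin : lagJ V c q q' univ = mc V c Vm Vp) (hfin : mc V c Vm Vp < ⊤) (hab : a ≤ b)
    (hp : IsH1loc p p') (hpa : p a = q a) (hpb : p b = q b) (hcp : ∀ t ∈ Icc a b, c ≤ V (p t)) :
    action V q q' a b ≤ action V p p' a b := by
  obtain ⟨hq1, hcq, hminus, hplus⟩ := hq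
  have hle := mc_le_lagJ
    (splice_mem_Gamma hab hq1 hp hq1 hpa.symm hpb hcq hcp hcq hminus hplus)
  rw [← hmin, lagJ_univ_eq_add hab] at hfin
  obtain ⟨hfin_l, hfin_mr⟩ := ENNReal.add_lt_top.1 hfin
  rw [← hmin, lagJ_splice hab, lagJ_univ_eq_add hab, ENNReal.add_le_add_iff_left hfin_l.ne,
    ENNReal.add_le_add_iff_right (ENNReal.add_lt_top.1 hfin_mr).2.ne,
    hq1.lagJ_Ioc_eq_ofReal hV hab fun t _ ↦ hcq t, hp.lagJ_Ioc_eq_ofReal hV hab hcp,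
    ENNReal.ofReal_le_ofReal_iff (sub_nonneg.2 (hp.mul_le_action hV hab hcp))] at hle
  exact (sub_le_sub_iff_right _).1 hle

theorem hasDerivAt_action (hV : ContDiff ℝ 1 V) (hq : IsH1loc q q') (hr : IsH1loc r r')
    (a b : ℝ) :
    HasDerivAt (fun s : ℝ ↦ action V (q + s • r) (q' + s • r') a b)
      (∫ t in a..b, (inner ℝ (q' t) (r' t) + inner ℝ (gradient V (q t)) (r t))) 0 := by
  have hgrad : IntervalIntegrable (fun t ↦ inner ℝ (gradient V (q t)) (r t)) volume a b :=
    (((continuous_gradient hV).comp hq.continuous).inner hr.continuous).intervalIntegrable a b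
  rw [intervalIntegral.integral_add (hq.intervalIntegrable_inner hr a b) hgrad]
  have haction (s : ℝ) : action V (q + s • r) (q' + s • r') a b =
      (∫ t in a..b, 2⁻¹ * ‖q' t + s • r' t‖ ^ 2) + ∫ t in a..b, V (q t + s • r t) := by
    have hs := hq.add_smul hr s
    exact intervalIntegral.integral_add ((hs.intervalIntegrable_norm_sq a b).const_mul _)
      ((hV.continuous.comp hs.continuous).intervalIntegrable a b)
  rw [funext haction]
  exact (hasDerivAt_integral_half_norm_sq (hq.intervalIntegrable_norm_sq a b)
    (hr.intervalIntegrable_norm_sq a b) (hq.intervalIntegrable_inner hr a b)).fun_add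
    (hasDerivAt_integral_comp_add_smul hV hq.continuous hr.continuous)

theorem integral_inner_add_inner_gradient_eq_zero (hV : ContDiff ℝ 1 V)
    (hq : (q, q') ∈ Gamma V c Vm Vp) (hmin : lagJ V c q q' univ = mc V c Vm Vp)
    (hfin : mc V c Vm Vp < ⊤) (hab : a ≤ b) (hcq : ∀ t ∈ Icc a b, c < V (q t))
    (hr : IsH1loc r r') (hra : r a = 0) (hrb : r b = 0) :
    ∫ t in a..b, (inner ℝ (q' t) (r' t) + inner ℝ (gradient V (q t)) (r t)) = 0 := by
  have hVc := hV.continuous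
  have hqc := hq.1.continuous
  have hrc := hr.continuous
  have hadmissible : ∀ᶠ s : ℝ in 𝓝 0, ∀ t ∈ Icc a b, c < V (q t + s • r t) := by
    refine isCompact_Icc.eventually_forall_of_forall_eventually fun t ht ↦ ?_
    refine Continuous.continuousAt (by fun_prop) |>.eventually_const_lt ?_
    simpa using hcq t ht
  refine IsLocalMin.hasDerivAt_eq_zero ?_ (hasDerivAt_action hV hq.1 hr a b)
  filter_upwards [hadmissible] with s hs
  simpa using action_le_of_lagJ_eq_mc hVc hq hmin hfin hab (hq.1.add_smul hr s)
    (by simp [hra]) (by simp [hrb]) fun t ht ↦ (hs t ht).le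

theorem contDiffAt_and_deriv_deriv_eq_gradient (hV : ContDiff ℝ 1 V)
    (hq : (q, q') ∈ Gamma V c Vm Vp) (hmin : lagJ V c q q' univ = mc V c Vm Vp)
    (hfin : mc V c Vm Vp < ⊤) {t : ℝ} (ht : c < V (q t)) :
    ContDiffAt ℝ 2 q t ∧ deriv (deriv q) t = gradient V (q t) := by
  have hqc := hq.1.continuous
  obtain ⟨δ, hδ, hball⟩ := nhds_basis_closedBall.mem_iff.1
    ((hV.continuous.comp hqc).continuousAt.eventually_const_lt ht)
  rw [Real.closedBall_eq_Icc] at hball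
  obtain ⟨y, hy, hy'', hya, hyb⟩ :=
    exists_contDiff_two_deriv_deriv_eq ((continuous_gradient hV).comp hqc)
      (by linarith : t - δ ≠ t + δ) (q (t - δ)) (q (t + δ))
  have hqy : EqOn q y (Icc (t - δ) (t + δ)) := by
    refine hq.1.eqOn_of_weak_eq hy (by linarith) hya hyb fun r r' hr hra hrb ↦ ?_
    rw [hy'']
    exact integral_inner_add_inner_gradient_eq_zero hV hq hmin hfin (by linarith) hball hr hra hrb
  have hev : q =ᶠ[𝓝 t] y := hqy.eventuallyEq_of_mem (Icc_mem_nhds (by linarith) (by linarith))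
  exact ⟨hy.contDiffAt.congr_of_eventuallyEq hev, by rw [hev.deriv.deriv_eq, hy'']; rfl⟩

theorem lt_of_alphaQ_lt_of_lt_omegaQ (hsplit : {x | V x ≤ c} = Vm ∪ Vp) {t : ℝ}
    (hα : alphaQ Vm q < t) (hω : t < omegaQ Vm Vp q) : c < V (q t) := by
  by_contra! hle
  rcases (hsplit ▸ hle : q t ∈ Vm ∪ Vp) with hm | hp
  · exact hα.not_ge (le_sSup ⟨t, rfl, hm⟩)
  · exact hω.not_ge (sInf_le ⟨t, rfl, hα, hp⟩)

theorem minimizer_is_solution_general (hV : ContDiff ℝ 1 V) (hsplit : {x | V x ≤ c} = Vm ∪ Vp)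
    (hsep : 0 < setDist Vm Vp) (hq : (q, q') ∈ Gamma V c Vm Vp)
    (hmin : lagJ V c q q' univ = mc V c Vm Vp) :
    ContDiffOn ℝ 2 q {t | c < V (q t)} ∧
      ∀ t, c < V (q t) → deriv (deriv q) t = gradient V (q t) := by
  have hsol {t : ℝ} (ht : c < V (q t)) :=
    contDiffAt_and_deriv_deriv_eq_gradient hV hq hmin (mc_lt_top hV.continuous hsplit hsep hq) ht
  exact ⟨fun t ht ↦ (hsol ht).1.contDiffWithinAt, fun t ht ↦ (hsol ht).2⟩

end Action

/-- Lemma 2.5: minimizers are classical solutions of `q̈ = ∇V(q)` on `(α_q, ω_q)`. -/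
theorem minimizer_is_solution {N : ℕ} (hN : 0 < N) (V : Euc N → ℝ) (hV : ContDiff ℝ 1 V)
    (c : ℝ) (Vm Vp : Set (Euc N)) (hVm : IsClosed Vm) (hVp : IsClosed Vp)
    (hsplit : {x | V x ≤ c} = Vm ∪ Vp) (hsep : 0 < setDist Vm Vp)
    (R : ℝ) (hR : 0 < R) (hcoer : Coercive V c Vm Vp R)
    (q q' : ℝ → Euc N) (hq : MemM V c Vm Vp R q q') :
    ContDiffOn ℝ 2 q {t : ℝ | alphaQ Vm q < (t : EReal) ∧ (t : EReal) < omegaQ Vm Vp q} ∧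
    ∀ t : ℝ, alphaQ Vm q < (t : EReal) → (t : EReal) < omegaQ Vm Vp q →
      deriv (deriv q) t = gradient V (q t) := by
  obtain ⟨hcont, heq⟩ := minimizer_is_solution_general hV hsplit hsep hq.1 hq.2.2.1
  exact ⟨hcont.mono fun t ht ↦ lt_of_alphaQ_lt_of_lt_omegaQ hsplit ht.1 ht.2,
    fun t hα hω ↦ heq t (lt_of_alphaQ_lt_of_lt_omegaQ hsplit hα hω)⟩
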